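/- Let L be a symmetric positive semidefinite real n×n matrix such that 2I − L is also positive semidefinite, let P = I − L, and let E(H) = trace(Hᵀ L H). Then for every real n×d matrix X, every natural number l, and every real α with 0 ≤ α ≤ 1, setting Y = P^l X one has E(αX + (1−α)Y) − E(Y) ≥ 2α(1−α) · ( trace(Xᵀ L Y) − E(Y) ). -/

import Mathlib

open Matrix BigOperators

/-!
Write `B(X, Y) = trace(Xᵀ L Y)`. Expanding the square, the difference of the two sides is exactly
`α² (B(X, X) - B(Y, Y))`. It is nonnegative because a propagation step never increases the energy:
`L - (I - L) L (I - L) = L (2I - L) L`.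
-/

section BilinForm

variable {R M : Type*} [CommRing R] [AddCommGroup M] [Module R M]

theorem bilinForm_combination_sub {B : LinearMap.BilinForm R M} (hB : B.IsSymm) (a : R) (x y : M) :
    B (a • x + (1 - a) • y) (a • x + (1 - a) • y) - B y y - 2 * a * (1 - a) * (B x y - B y y) =
      a * (B x x - B y y) * a := by
  have hyx : B y x = B x y := hB.eq y x
  simp only [map_add, map_smul, LinearMap.add_apply, LinearMap.smul_apply, smul_eq_mul, hyx]
  ring

end BilinForm

theorem isSymm_of_posSemidef_two_smul_one_sub {R n : Type*} [Ring R] [PartialOrder R] [StarRing R]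
    [TrivialStar R] [DecidableEq n] {L : Matrix n n R}
    (hL : ((2 : R) • (1 : Matrix n n R) - L).PosSemidef) : L.IsSymm := by
  simpa only [sub_sub_cancel] using
    (isSymm_one.smul (2 : R)).sub (isHermitian_iff_isSymm.1 hL.isHermitian)

section Dirichlet

variable {R n d : Type*} [Fintype n] [Fintype d]

section CommRing

variable [CommRing R]

/-- The Dirichlet form `(X, Y) ↦ trace (Xᵀ L Y)` of a matrix `L`, whose diagonal
`X ↦ trace (Xᵀ L X)` is the Dirichlet energy. It is bundled as a bilinear form so that energies of
linear combinations can be expanded. -/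
def dirichletForm (L : Matrix n n R) : LinearMap.BilinForm R (Matrix n d R) :=
  LinearMap.mk₂ R (fun X Y ↦ (Xᵀ * L * Y).trace)
    (fun X X' Y ↦ by simp only [transpose_add, Matrix.add_mul, trace_add])
    (fun c X Y ↦ by simp only [transpose_smul, Matrix.smul_mul, trace_smul])
    (fun X Y Y' ↦ by simp only [Matrix.mul_add, trace_add])
    (fun c X Y ↦ by simp only [Matrix.mul_smul, trace_smul])

theorem dirichletForm_apply (L : Matrix n n R) (X Y : Matrix n d R) :
    dirichletForm L X Y = (Xᵀ * L * Y).trace :=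
  rfl

theorem dirichletForm_isSymm {L : Matrix n n R} (hL : L.IsSymm) :
    (dirichletForm (d := d) L).IsSymm where
  eq X Y := by
    rw [dirichletForm_apply, ← trace_transpose]
    simp only [dirichletForm_apply, transpose_mul, transpose_transpose, hL.eq, Matrix.mul_assoc]

theorem dirichletForm_self_sub_propagation [DecidableEq n] {L : Matrix n n R} (hL : L.IsSymm)
    (X : Matrix n d R) :
    dirichletForm L X X - dirichletForm L ((1 - L) * X) ((1 - L) * X) =
      dirichletForm ((2 : R) • 1 - L) (L * X) (L * X) := by
  have factorization : L - (1 - L) * L * (1 - L) = L * ((2 : R) • 1 - L) * L := by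
    rw [two_smul]
    noncomm_ring
  simp only [dirichletForm_apply, transpose_mul, transpose_sub, transpose_one, hL.eq, ← trace_sub]
  congr 1
  calc
    Xᵀ * L * X - Xᵀ * (1 - L) * L * ((1 - L) * X)
      = Xᵀ * (L - (1 - L) * L * (1 - L)) * X := by
        rw [Matrix.mul_sub Xᵀ L, Matrix.sub_mul (Xᵀ * L)]
        simp only [Matrix.mul_assoc]
    _ = Xᵀ * L * ((2 : R) • 1 - L) * (L * X) := by
        rw [factorization]
        simp only [Matrix.mul_assoc]

end CommRing

variable [CommRing R] [PartialOrder R] [StarRing R] [StarOrderedRing R] [TrivialStar R]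

theorem dirichletForm_self_nonneg {A : Matrix n n R} (hA : A.PosSemidef) (X : Matrix n d R) :
    0 ≤ dirichletForm A X X := by
  simpa only [dirichletForm_apply, conjTranspose_eq_transpose_of_trivial] using
    (hA.conjTranspose_mul_mul_same X).trace_nonneg

variable [DecidableEq n]

theorem antitone_dirichletForm_propagation {L : Matrix n n R}
    (hL : ((2 : R) • (1 : Matrix n n R) - L).PosSemidef) (X : Matrix n d R) :
    Antitone fun l : ℕ ↦ dirichletForm L ((1 - L) ^ l * X) ((1 - L) ^ l * X) := by
  refine antitone_nat_of_succ_le fun l ↦ ?_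
  rw [pow_succ', Matrix.mul_assoc, ← sub_nonneg,
    dirichletForm_self_sub_propagation (isSymm_of_posSemidef_two_smul_one_sub hL)]
  exact dirichletForm_self_nonneg hL _

theorem energy_combination_lower_general {L : Matrix n n R}
    (hL : ((2 : R) • (1 : Matrix n n R) - L).PosSemidef) (X : Matrix n d R) (l : ℕ) (α : R)
    {Y : Matrix n d R} (hY : Y = (1 - L) ^ l * X) :
    2 * α * (1 - α) * (dirichletForm L X Y - dirichletForm L Y Y) ≤
      dirichletForm L (α • X + (1 - α) • Y) (α • X + (1 - α) • Y) - dirichletForm L Y Y := by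
  have energy_le : dirichletForm L Y Y ≤ dirichletForm L X X := by
    simpa only [hY, pow_zero, Matrix.one_mul] using
      antitone_dirichletForm_propagation hL X (Nat.zero_le l)
  have symm := dirichletForm_isSymm (d := d) (isSymm_of_posSemidef_two_smul_one_sub hL)
  rw [← sub_nonneg, bilinForm_combination_sub symm]
  simpa only [star_trivial] using star_left_conjugate_nonneg (sub_nonneg.2 energy_le) α

end Dirichlet

/-- With `Y = P^l X`, one has
`E(αX + (1−α)Y) − E(Y) ≥ 2α(1−α)(trace(Xᵀ L Y) − E(Y))`. -/
theorem energy_combination_lower (n d : ℕ) (L : Matrix (Fin n) (Fin n) ℝ)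
    (hL : L.PosSemidef)
    (h2L : ((2 : ℝ) • (1 : Matrix (Fin n) (Fin n) ℝ) - L).PosSemidef)
    (P : Matrix (Fin n) (Fin n) ℝ) (hP : P = 1 - L)
    (X : Matrix (Fin n) (Fin d) ℝ) (l : ℕ) (α : ℝ) (hα0 : 0 ≤ α) (hα1 : α ≤ 1)
    (Y : Matrix (Fin n) (Fin d) ℝ) (hY : Y = P ^ l * X) :
    2 * α * (1 - α) * ((Xᵀ * L * Y).trace - (Yᵀ * L * Y).trace) ≤
      ((α • X + (1 - α) • Y)ᵀ * L * (α • X + (1 - α) • Y)).trace -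
        (Yᵀ * L * Y).trace :=
  energy_combination_lower_general h2L X l α (hP ▸ hY)
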